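/- arXiv:1209.2411 — 3 statements merged into one kernel-verified Lean document; each statement's English description precedes it below -/
import Mathlib

section
/- Let h : ℝ × ℝ → ℝ be twice continuously differentiable in x and continuously differentiable in t on an open set U ⊆ ℝ × ℝ, suppose h(t,x) ≠ 0 on U, and suppose h solves the backward heat equation −∂h/∂t = (1/2)·∂²h/∂x² on U. Then the function μ(t,x) := (∂h/∂x)(t,x) / h(t,x) solves Burgers' equation −∂μ/∂t = (1/2)·∂²μ/∂x² + μ·∂μ/∂x on U. -/
open Set Filter Topology

/-- A function that does not exceed `f a` to the right of `a` has nonpositive derivative at `a`. -/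
lemma HasDerivAt.nonpos_of_eventually_le_right {f : ℝ → ℝ} {f' a : ℝ} (hf : HasDerivAt f f' a)
    (hle : ∀ᶠ y in 𝓝[>] a, f y ≤ f a) : f' ≤ 0 := by
  have hs : Tendsto (slope f a) (𝓝[>] a) (𝓝 f') :=
    (hasDerivAt_iff_tendsto_slope.1 hf).mono_left (nhdsGT_le_nhdsNE a)
  refine le_of_tendsto hs ?_
  filter_upwards [hle, self_mem_nhdsWithin] with y hy hay
  rw [slope_def_field]
  exact div_nonpos_of_nonpos_of_nonneg (sub_nonpos.2 hy) (sub_pos.2 hay).le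

/-- Necessary second-order condition at a local maximum. -/
lemma IsLocalMax.second_deriv_nonpos {f f' : ℝ → ℝ} {f'' a : ℝ} (hmax : IsLocalMax f a)
    (hf : ∀ᶠ y in 𝓝 a, HasDerivAt f (f' y) y) (hf' : HasDerivAt f' f'' a) : f'' ≤ 0 := by
  by_contra! hpos
  have hderiv : deriv f =ᶠ[𝓝 a] f' := hf.mono fun y hy => hy.deriv
  have hdd : deriv (deriv f) a = f'' := hderiv.deriv_eq.trans hf'.deriv
  have hmin : IsLocalMin f a := isLocalMin_of_deriv_deriv_pos (hdd ▸ hpos) hmax.deriv_eq_zero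
    hf.self_of_nhds.continuousAt
  have hconst : f =ᶠ[𝓝 a] fun _ => f a := by
    filter_upwards [hmax, hmin] with y h₁ h₂ using le_antisymm h₁ h₂
  have hzero : deriv (deriv f) a = 0 := by
    rw [hconst.deriv.deriv_eq]
    simp
  linarith

/-- `u` solves the backward heat equation classically at every point of `S`, with spatial
derivatives `ux` and `uxx`. -/
structure IsBackwardHeatOn (S : Set (ℝ × ℝ)) (u ux uxx : ℝ × ℝ → ℝ) : Prop where
  cont : ContinuousOn u S
  time : ∀ p ∈ S, HasDerivAt (fun τ => u (τ, p.2)) (-(1 / 2) * uxx p) p.1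
  space : ∀ p ∈ S, HasDerivAt (fun ξ => u (p.1, ξ)) (ux p) p.2
  space_space : ∀ p ∈ S, HasDerivAt (fun ξ => ux (p.1, ξ)) (uxx p) p.2

/-- The backward parabolic cylinder of radius `r` based at `p`. -/
def heatBox (p : ℝ × ℝ) (r : ℝ) : Set (ℝ × ℝ) :=
  Icc p.1 (p.1 + r ^ 2) ×ˢ Icc (p.2 - r) (p.2 + r)

/-- Difference quotient in the space variable. -/
noncomputable def spaceQuot (δ : ℝ) (u : ℝ × ℝ → ℝ) (p : ℝ × ℝ) : ℝ :=
  δ⁻¹ * (u (p.1, p.2 + δ) - u p)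

namespace IsBackwardHeatOn

variable {S T : Set (ℝ × ℝ)} {u ux uxx v vx vxx : ℝ × ℝ → ℝ}

lemma mono (hu : IsBackwardHeatOn S u ux uxx) (hTS : T ⊆ S) : IsBackwardHeatOn T u ux uxx :=
  ⟨hu.cont.mono hTS, fun p hp => hu.time p (hTS hp), fun p hp => hu.space p (hTS hp),
    fun p hp => hu.space_space p (hTS hp)⟩

lemma neg (hu : IsBackwardHeatOn S u ux uxx) :
    IsBackwardHeatOn S (fun p => -u p) (fun p => -ux p) (fun p => -uxx p) :=
  ⟨hu.cont.neg, fun p hp => (hu.time p hp).neg.congr_deriv (by ring),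
    fun p hp => (hu.space p hp).neg, fun p hp => (hu.space_space p hp).neg⟩

lemma sub (hu : IsBackwardHeatOn S u ux uxx) (hv : IsBackwardHeatOn S v vx vxx) :
    IsBackwardHeatOn S (fun p => u p - v p) (fun p => ux p - vx p) (fun p => uxx p - vxx p) :=
  ⟨hu.cont.sub hv.cont, fun p hp => ((hu.time p hp).sub (hv.time p hp)).congr_deriv (by ring),
    fun p hp => (hu.space p hp).sub (hv.space p hp),
    fun p hp => (hu.space_space p hp).sub (hv.space_space p hp)⟩

lemma spaceQuot (hu : IsBackwardHeatOn S u ux uxx) {δ : ℝ} (hTS : T ⊆ S)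
    (hshift : ∀ p ∈ T, (p.1, p.2 + δ) ∈ S) :
    IsBackwardHeatOn T (spaceQuot δ u) (spaceQuot δ ux) (spaceQuot δ uxx) where
  cont := by
    have hc : ContinuousOn (fun p : ℝ × ℝ => u (p.1, p.2 + δ)) T :=
      hu.cont.comp (by fun_prop) hshift
    exact continuousOn_const.mul (hc.sub (hu.cont.mono hTS))
  time p hp := by
    refine (((hu.time _ (hshift p hp)).sub (hu.time p (hTS hp))).const_mul δ⁻¹).congr_deriv ?_
    simp only [_root_.spaceQuot]
    ring
  space p hp :=
    (((hu.space _ (hshift p hp)).comp_add_const p.2 δ).sub (hu.space p (hTS hp))).const_mul δ⁻¹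
  space_space p hp :=
    (((hu.space_space _ (hshift p hp)).comp_add_const p.2 δ).sub
      (hu.space_space p (hTS hp))).const_mul δ⁻¹

/-- Comparison of the odd reflection of a solution with the barrier
`(τ - t) / r² + 3 y / r - 2 y² / r²`. -/
lemma reflection_le {p : ℝ × ℝ} {r M : ℝ} (hr : 0 < r) (hM : 0 < M)
    (hu : IsBackwardHeatOn (heatBox p r) u ux uxx) (hb : ∀ q ∈ heatBox p r, |u q| ≤ M)
    {y : ℝ} (hy : y ∈ Icc 0 r) :
    u (p.1, p.2 + y) - u (p.1, p.2 - y) ≤ 2 * M * (3 * (y / r) - 2 * (y / r) ^ 2) := by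
  set w : ℝ × ℝ → ℝ := fun q => u (q.1, p.2 + q.2) - u (q.1, p.2 - q.2) -
    2 * M * ((q.1 - p.1) / r ^ 2 + 3 * (q.2 / r) - 2 * (q.2 / r) ^ 2) with hw
  set K : Set (ℝ × ℝ) := Icc p.1 (p.1 + r ^ 2) ×ˢ Icc 0 r
  have hplus : ∀ q ∈ K, (q.1, p.2 + q.2) ∈ heatBox p r := fun q hq =>
    ⟨hq.1, by linarith [hq.2.1], by linarith [hq.2.2]⟩
  have hminus : ∀ q ∈ K, (q.1, p.2 - q.2) ∈ heatBox p r := fun q hq =>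
    ⟨hq.1, by linarith [hq.2.2], by linarith [hq.2.1]⟩
  have hwc : ContinuousOn w K := by
    have h₁ : ContinuousOn (fun q : ℝ × ℝ => u (q.1, p.2 + q.2)) K :=
      hu.cont.comp (by fun_prop) hplus
    have h₂ : ContinuousOn (fun q : ℝ × ℝ => u (q.1, p.2 - q.2)) K :=
      hu.cont.comp (by fun_prop) hminus
    exact (h₁.sub h₂).sub (by fun_prop)
  have hmem : (p.1, y) ∈ K := ⟨⟨le_rfl, le_add_of_nonneg_right (sq_nonneg r)⟩, hy⟩
  obtain ⟨q, hq, hqmax⟩ :=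
    (isCompact_Icc.prod isCompact_Icc : IsCompact K).exists_isMaxOn ⟨_, hmem⟩ hwc
  suffices hle : w q ≤ 0 by
    have := (hqmax hmem).trans hle
    simp only [hw, sub_self, zero_div, zero_add] at this
    linarith
  by_contra! hpos
  obtain ⟨⟨ht₀, ht₁⟩, hy₀, hy₁⟩ := hq
  have hq : q ∈ K := ⟨⟨ht₀, ht₁⟩, hy₀, hy₁⟩
  have hdiff : u (q.1, p.2 + q.2) - u (q.1, p.2 - q.2) ≤ 2 * M := by
    linarith [(abs_le.1 (hb _ (hplus q hq))).2, (abs_le.1 (hb _ (hminus q hq))).1]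
  have hs₀ : 0 ≤ (q.1 - p.1) / r ^ 2 := div_nonneg (by linarith) (by positivity)
  have hz₀ : 0 ≤ q.2 / r := by positivity
  have hz₁ : q.2 / r ≤ 1 := (div_le_one hr).2 hy₁
  have hbarrier : (q.1 - p.1) / r ^ 2 + 3 * (q.2 / r) - 2 * (q.2 / r) ^ 2 < 1 := by
    by_contra! hge
    have : 2 * M * 1 ≤ 2 * M * ((q.1 - p.1) / r ^ 2 + 3 * (q.2 / r) - 2 * (q.2 / r) ^ 2) := by
      gcongr
    simp only [hw] at hpos
    linarith
  have hy_pos : 0 < q.2 := by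
    refine lt_of_le_of_ne hy₀ fun h0 => ?_
    have : 0 ≤ 2 * M * ((q.1 - p.1) / r ^ 2) := by positivity
    simp only [hw, ← h0, add_zero, sub_zero, sub_self, zero_div, mul_zero] at hpos
    norm_num at hpos
    linarith
  have hy_lt : q.2 < r := by
    refine lt_of_le_of_ne hy₁ fun h1 => ?_
    have : q.2 / r = 1 := by rw [h1, div_self hr.ne']
    rw [this] at hbarrier
    linarith
  have ht_lt : q.1 < p.1 + r ^ 2 := by
    refine lt_of_le_of_ne ht₁ fun h1 => ?_
    have : (q.1 - p.1) / r ^ 2 = 1 := by rw [h1, add_sub_cancel_left, div_self (by positivity)]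
    rw [this] at hbarrier
    nlinarith
  have hwt : HasDerivAt (fun τ => w (τ, q.2))
      (-(1 / 2) * uxx (q.1, p.2 + q.2) - -(1 / 2) * uxx (q.1, p.2 - q.2) - 2 * M * (1 / r ^ 2))
      q.1 := by
    have h₁ := hu.time _ (hplus q hq)
    have h₂ := hu.time _ (hminus q hq)
    refine (h₁.sub h₂).sub (HasDerivAt.const_mul (2 * M) ?_)
    exact ((((hasDerivAt_id' q.1).sub_const p.1).div_const (r ^ 2)).add_const
      (3 * (q.2 / r))).sub_const (2 * (q.2 / r) ^ 2)
  have hwt_le := hwt.nonpos_of_eventually_le_right (by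
    filter_upwards [Ioo_mem_nhdsGT ht_lt] with τ hτ
    exact hqmax (show (τ, q.2) ∈ K from ⟨⟨ht₀.trans hτ.1.le, hτ.2.le⟩, hy₀, hy₁⟩))
  have hnear : ∀ᶠ η in 𝓝 q.2, (q.1, η) ∈ K := by
    filter_upwards [Ioo_mem_nhds hy_pos hy_lt] with η hη
    exact ⟨⟨ht₀, ht₁⟩, hη.1.le, hη.2.le⟩
  have hmax : IsLocalMax (fun η => w (q.1, η)) q.2 := by
    filter_upwards [hnear] with η hη using hqmax hη
  have hwy : ∀ᶠ η in 𝓝 q.2, HasDerivAt (fun η => w (q.1, η))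
      (ux (q.1, p.2 + η) + ux (q.1, p.2 - η) - 2 * M * (3 / r - 4 * η / r ^ 2)) η := by
    filter_upwards [hnear] with η hη
    have h₁ := (hu.space _ (hplus _ hη)).comp_const_add p.2 η
    have h₂ := (hu.space _ (hminus _ hη)).comp_const_sub p.2 η
    have hid : HasDerivAt (fun η : ℝ => η / r) (1 / r) η := (hasDerivAt_id η).div_const r
    have h₃ := (((hid.const_mul 3).const_add ((q.1 - p.1) / r ^ 2)).sub
      ((hid.pow 2).const_mul 2)).const_mul (2 * M)
    refine ((h₁.sub h₂).sub h₃).congr_deriv ?_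
    simp only [Nat.cast_ofNat, Nat.add_one_sub_one, pow_one]
    field_simp
    ring
  have hwyy : HasDerivAt
      (fun η => ux (q.1, p.2 + η) + ux (q.1, p.2 - η) - 2 * M * (3 / r - 4 * η / r ^ 2))
      (uxx (q.1, p.2 + q.2) - uxx (q.1, p.2 - q.2) + 2 * M * (4 / r ^ 2)) q.2 := by
    have h₁ := (hu.space_space _ (hplus _ hq)).comp_const_add p.2 q.2
    have h₂ := (hu.space_space _ (hminus _ hq)).comp_const_sub p.2 q.2
    have h₃ := ((((hasDerivAt_id q.2).const_mul 4).div_const (r ^ 2)).const_sub (3 / r)).const_mul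
      (2 * M)
    refine ((h₁.add h₂).sub h₃).congr_deriv ?_
    ring
  have hwyy_le := hmax.second_deriv_nonpos hwy hwyy
  have : 0 < M * (1 / r ^ 2) := by positivity
  have h4 : (4 : ℝ) / r ^ 2 = 4 * (1 / r ^ 2) := by ring
  rw [h4] at hwyy_le
  linarith

lemma space_deriv_le {p : ℝ × ℝ} {r M : ℝ} (hr : 0 < r) (hM : 0 < M)
    (hu : IsBackwardHeatOn (heatBox p r) u ux uxx) (hb : ∀ q ∈ heatBox p r, |u q| ≤ M) :
    ux p ≤ 3 * M / r := by
  have hp : p ∈ heatBox p r :=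
    ⟨⟨le_rfl, le_add_of_nonneg_right (sq_nonneg _)⟩, by linarith, by linarith⟩
  have h₁ : HasDerivAt (fun y => u (p.1, p.2 + y)) (ux p) 0 :=
    HasDerivAt.comp_const_add p.2 0 (by simpa using hu.space p hp)
  have h₂ : HasDerivAt (fun y => u (p.1, p.2 - y)) (-ux p) 0 :=
    HasDerivAt.comp_const_sub p.2 0 (by simpa using hu.space p hp)
  have h₃ : HasDerivAt (fun y : ℝ => 6 * M / r * y) (6 * M / r) 0 := by
    simpa using (hasDerivAt_id (0 : ℝ)).const_mul (6 * M / r)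
  have hle := ((h₁.sub h₂).sub h₃).nonpos_of_eventually_le_right (by
    filter_upwards [Ioo_mem_nhdsGT hr] with y hy
    have := hu.reflection_le hr hM hb ⟨hy.1.le, hy.2.le⟩
    have hsq : 0 ≤ M * (y / r) ^ 2 := by positivity
    have hlin : 6 * M / r * y = 6 * (M * (y / r)) := by ring
    simp only [Pi.sub_apply, add_zero, sub_zero, mul_zero, sub_self, hlin]
    linarith)
  have : 6 * M / r = 2 * (3 * M / r) := by ring
  linarith

/-- Interior gradient estimate. -/
lemma abs_space_deriv_le {p : ℝ × ℝ} {r M : ℝ} (hr : 0 < r) (hM : 0 < M)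
    (hu : IsBackwardHeatOn (heatBox p r) u ux uxx) (hb : ∀ q ∈ heatBox p r, |u q| ≤ M) :
    |ux p| ≤ 3 * M / r :=
  abs_le.2 ⟨by linarith [hu.neg.space_deriv_le hr hM (by simpa using hb)],
    hu.space_deriv_le hr hM hb⟩

end IsBackwardHeatOn

/-- A difference quotient is as close to a constant `c` as the derivative is. -/
lemma abs_spaceQuot_sub_le {u ux : ℝ × ℝ → ℝ} {p : ℝ × ℝ} {δ c C : ℝ} (hδ : δ ≠ 0)
    (hu : ∀ ξ ∈ uIcc p.2 (p.2 + δ), HasDerivAt (fun ξ => u (p.1, ξ)) (ux (p.1, ξ)) ξ)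
    (hb : ∀ ξ ∈ uIcc p.2 (p.2 + δ), |ux (p.1, ξ) - c| ≤ C) :
    |spaceQuot δ u p - c| ≤ C := by
  have hd : ∀ ξ ∈ uIcc p.2 (p.2 + δ), HasDerivWithinAt (fun ξ => u (p.1, ξ) - c * ξ)
      (ux (p.1, ξ) - c) (uIcc p.2 (p.2 + δ)) ξ := fun ξ hξ => by
    simpa using ((hu ξ hξ).fun_sub ((hasDerivAt_id' ξ).const_mul c)).hasDerivWithinAt
  have hmv := (convex_uIcc p.2 (p.2 + δ)).norm_image_sub_le_of_norm_hasDerivWithin_le hd hb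
    left_mem_uIcc right_mem_uIcc
  simp only [Real.norm_eq_abs, add_sub_cancel_left] at hmv
  have heq : spaceQuot δ u p - c =
      δ⁻¹ * (u (p.1, p.2 + δ) - c * (p.2 + δ) - (u (p.1, p.2) - c * p.2)) := by
    simp only [spaceQuot]
    field_simp
    ring
  rw [heq, abs_mul, abs_inv, inv_mul_le_iff₀ (abs_pos.2 hδ), mul_comm |δ|]
  exact hmv

lemma eventually_abs_lt {r : ℝ} (hr : 0 < r) : ∀ᶠ δ : ℝ in 𝓝 0, |δ| < r :=
  continuous_abs.continuousAt.eventually_lt continuousAt_const (by simpa using hr)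

lemma tendsto_spaceQuot {u : ℝ × ℝ → ℝ} {p : ℝ × ℝ} {a : ℝ}
    (hu : HasDerivAt (fun ξ => u (p.1, ξ)) a p.2) :
    Tendsto (fun δ => spaceQuot δ u p) (𝓝[≠] 0) (𝓝 a) :=
  hu.tendsto_slope_zero

namespace IsBackwardHeatOn

variable {u ux uxx : ℝ × ℝ → ℝ}

/-- Interior estimate for the second spatial derivative. -/
lemma abs_space_space_deriv_le {p : ℝ × ℝ} {r M : ℝ} (hr : 0 < r) (hM : 0 < M)
    (hu : IsBackwardHeatOn (heatBox p (3 * r)) u ux uxx)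
    (hb : ∀ q ∈ heatBox p (3 * r), |u q| ≤ M) :
    |uxx p| ≤ 9 * M / r ^ 2 := by
  have hr2 : 0 < r ^ 2 := by positivity
  have hp : p ∈ heatBox p (3 * r) :=
    ⟨⟨le_rfl, le_add_of_nonneg_right (sq_nonneg _)⟩, by linarith, by linarith⟩
  have hsub : ∀ t x, t ∈ Icc p.1 (p.1 + r ^ 2) → x ∈ Icc (p.2 - 2 * r) (p.2 + 2 * r) →
      heatBox (t, x) r ⊆ heatBox p (3 * r) := by
    rintro t x ⟨ht₀, ht₁⟩ ⟨hx₀, hx₁⟩ q ⟨⟨h₁, h₂⟩, h₃, h₄⟩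
    simp only at h₁ h₂ h₃ h₄
    exact ⟨⟨by linarith, by nlinarith⟩, by linarith, by linarith⟩
  have hself : ∀ t x, (t, x) ∈ heatBox (t, x) r := fun t x =>
    ⟨⟨le_rfl, le_add_of_nonneg_right (sq_nonneg _)⟩, by simp only []; linarith,
      by simp only []; linarith⟩
  refine le_of_tendsto (tendsto_spaceQuot (hu.space_space p hp)).abs ?_
  have hsmall : ∀ᶠ δ : ℝ in 𝓝[≠] 0, |δ| < r :=
    nhdsWithin_le_nhds (eventually_abs_lt hr)
  filter_upwards [hsmall, self_mem_nhdsWithin] with δ hδ hδ0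
  obtain ⟨hδ₁, hδ₂⟩ := abs_lt.1 hδ
  have hquot : IsBackwardHeatOn (heatBox p r) (_root_.spaceQuot δ u) (_root_.spaceQuot δ ux)
      (_root_.spaceQuot δ uxx) := by
    refine hu.spaceQuot (hsub p.1 p.2 ⟨le_rfl, by linarith⟩ ⟨by linarith, by linarith⟩) ?_
    rintro q ⟨ht, hx₀, hx₁⟩
    exact hsub q.1 (q.2 + δ) ht ⟨by linarith, by linarith⟩ (hself _ _)
  have hquot_le : ∀ q ∈ heatBox p r, |_root_.spaceQuot δ u q| ≤ 3 * M / r := by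
    rintro q ⟨ht, hx₀, hx₁⟩
    have hbox : ∀ ξ ∈ uIcc q.2 (q.2 + δ), heatBox (q.1, ξ) r ⊆ heatBox p (3 * r) := by
      intro ξ hξ
      refine hsub q.1 ξ ht ?_
      have : uIcc q.2 (q.2 + δ) ⊆ Icc (p.2 - 2 * r) (p.2 + 2 * r) :=
        uIcc_subset_Icc ⟨by linarith, by linarith⟩ ⟨by linarith, by linarith⟩
      exact this hξ
    have := abs_spaceQuot_sub_le (u := u) (ux := ux) (c := 0) (C := 3 * M / r) hδ0
      (fun ξ hξ => hu.space (q.1, ξ) (hbox ξ hξ (hself _ _)))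
      (fun ξ hξ => by
        rw [sub_zero]
        exact (hu.mono (hbox ξ hξ)).abs_space_deriv_le hr hM fun z hz => hb z (hbox ξ hξ hz))
    simpa using this
  refine (hquot.abs_space_deriv_le hr (by positivity) hquot_le).trans_eq ?_
  field_simp
  ring

/-- Interior regularity: a solution has a third spatial derivative, which is also (up to the factor
`-1/2`) the mixed derivative. -/
lemma exists_third_deriv {U : Set (ℝ × ℝ)} (hU : IsOpen U) (hu : IsBackwardHeatOn U u ux uxx)
    (hux : ContinuousOn ux U) {p : ℝ × ℝ} (hp : p ∈ U) :
    ∃ g : ℝ, HasDerivAt (fun ξ => uxx (p.1, ξ)) g p.2 ∧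
      HasDerivAt (fun τ => ux (τ, p.2)) (-(1 / 2) * g) p.1 := by
  obtain ⟨ρ, hρ, hball⟩ := Metric.nhds_basis_closedBall.mem_iff.1 (hU.mem_nhds hp)
  obtain ⟨r, hr, hr1, hrρ⟩ : ∃ r : ℝ, 0 < r ∧ 9 * r ≤ 1 ∧ 5 * r ≤ ρ :=
    ⟨min (1 / 9) (ρ / 5), by positivity, by linarith [min_le_left (1 / 9) (ρ / 5)],
      by linarith [min_le_right (1 / 9) (ρ / 5)]⟩
  have hmem : ∀ t x, |t - p.1| ≤ 5 * r → |x - p.2| ≤ 5 * r → (t, x) ∈ Metric.closedBall p ρ := by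
    intro t x ht hx
    rw [Metric.mem_closedBall, Prod.dist_eq, Real.dist_eq, Real.dist_eq]
    exact max_le (ht.trans hrρ) (hx.trans hrρ)
  have huc := (isCompact_closedBall p ρ).uniformContinuousOn_of_continuous (hux.mono hball)
  rw [Metric.uniformContinuousOn_iff] at huc
  set V : Set (ℝ × ℝ) := Icc (p.1 - 4 * r) (p.1 + 4 * r) ×ˢ Icc (p.2 - 4 * r) (p.2 + 4 * r)
  have hVmem : ∀ q ∈ V, ∀ η, |η| ≤ r → (q.1, q.2 + η) ∈ Metric.closedBall p ρ := by
    rintro q ⟨⟨h₁, h₂⟩, h₃, h₄⟩ η hη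
    obtain ⟨h₅, h₆⟩ := abs_le.1 hη
    exact hmem _ _ (abs_le.2 ⟨by linarith, by linarith⟩) (abs_le.2 ⟨by linarith, by linarith⟩)
  have hVU : V ⊆ U := fun q hq => hball (by simpa using hVmem q hq 0 (by simpa using hr.le))
  have hquot : ∀ δ, |δ| < r → IsBackwardHeatOn V (_root_.spaceQuot δ u) (_root_.spaceQuot δ ux)
      (_root_.spaceQuot δ uxx) := fun δ hδ =>
    hu.spaceQuot hVU fun q hq => hball (hVmem q hq δ hδ.le)
  have happrox : ∀ ε > 0, ∀ᶠ δ in 𝓝[≠] (0 : ℝ), |δ| < r ∧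
      ∀ q ∈ V, |_root_.spaceQuot δ u q - ux q| ≤ ε := by
    intro ε hε
    obtain ⟨d, hd, hclose⟩ := huc ε hε
    have hsmall : ∀ᶠ δ : ℝ in 𝓝[≠] 0, |δ| < min r d :=
      nhdsWithin_le_nhds (eventually_abs_lt (lt_min hr hd))
    filter_upwards [hsmall, self_mem_nhdsWithin] with δ hδ hδ0
    obtain ⟨hδr, hδd⟩ := lt_min_iff.1 hδ
    refine ⟨hδr, fun q hq => ?_⟩
    have hξ : ∀ ξ ∈ uIcc q.2 (q.2 + δ), |ξ - q.2| ≤ |δ| ∧ (q.1, ξ) ∈ Metric.closedBall p ρ := by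
      intro ξ hξ
      have h := abs_sub_left_of_mem_uIcc hξ
      rw [add_sub_cancel_left] at h
      exact ⟨h, by simpa using hVmem q hq (ξ - q.2) (h.trans hδr.le)⟩
    refine abs_spaceQuot_sub_le hδ0 (fun ξ h => hu.space (q.1, ξ) (hball (hξ ξ h).2)) fun ξ h => ?_
    have hdist := hclose (q.1, ξ) (hξ ξ h).2 q (by simpa using hVmem q hq 0 (by simpa using hr.le))
      (by
        rw [Prod.dist_eq, dist_self, Real.dist_eq]
        exact max_lt hd ((hξ ξ h).1.trans_lt hδd))
    exact hdist.le
  set N : Set (ℝ × ℝ) := Icc (p.1 - r) (p.1 + r) ×ˢ Icc (p.2 - r) (p.2 + r)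
  have hbox : ∀ q ∈ N, heatBox q (3 * r) ⊆ V := by
    rintro q ⟨⟨h₁, h₂⟩, h₃, h₄⟩ z ⟨⟨h₅, h₆⟩, h₇, h₈⟩
    exact ⟨⟨by linarith, by nlinarith⟩, by linarith, by linarith⟩
  have hcauchy : UniformCauchySeqOn (fun δ => _root_.spaceQuot δ uxx) (𝓝[≠] 0) N := by
    intro s hs
    obtain ⟨ε, hε, hεs⟩ := Metric.mem_uniformity_dist.1 hs
    set e : ℝ := ε * r ^ 2 / 36 with he
    have he0 : 0 < e := by positivity
    have hev := happrox e he0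
    filter_upwards [hev.prod_mk hev] with ⟨δ, δ'⟩ ⟨⟨hδ, hδu⟩, hδ', hδu'⟩ q hq
    refine hεs ?_
    have hbound : ∀ z ∈ heatBox q (3 * r),
        |_root_.spaceQuot δ u z - _root_.spaceQuot δ' u z| ≤ 2 * e := by
      intro z hz
      have h₁ := abs_le.1 (hδu z (hbox q hq hz))
      have h₂ := abs_le.1 (hδu' z (hbox q hq hz))
      exact abs_le.2 ⟨by linarith [h₁.1, h₂.2], by linarith [h₁.2, h₂.1]⟩
    have := (((hquot δ hδ).sub (hquot δ' hδ')).mono (hbox q hq)).abs_space_space_deriv_le hr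
      (by positivity) hbound
    rw [Real.dist_eq]
    refine this.trans_lt ?_
    have : 9 * (2 * e) / r ^ 2 = ε / 2 := by
      rw [he]
      field_simp
      norm_num
    linarith
  have hlim : ∀ q ∈ N, ∃ g, Tendsto (fun δ => _root_.spaceQuot δ uxx q) (𝓝[≠] 0) (𝓝 g) :=
    fun q hq => cauchy_map_iff_exists_tendsto.1 (hcauchy.cauchy_map hq)
  choose! g hg using hlim
  have hunif := hcauchy.tendstoUniformlyOn_of_tendsto hg
  have hpN : p ∈ N := ⟨⟨by linarith, by linarith⟩, by linarith, by linarith⟩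
  have hline : ∀ τ ∈ Ioo (p.1 - r) (p.1 + r), (τ, p.2) ∈ N := fun τ hτ =>
    ⟨⟨hτ.1.le, hτ.2.le⟩, hpN.2⟩
  have hNV : N ⊆ V := fun q hq =>
    ⟨⟨by linarith [hq.1.1], by linarith [hq.1.2]⟩, by linarith [hq.2.1], by linarith [hq.2.2]⟩
  refine ⟨g p, hasDerivAt_iff_tendsto_slope_zero.2 (hg p hpN), ?_⟩
  have hunif' : TendstoUniformlyOn (fun δ τ => -(1 / 2) * _root_.spaceQuot δ uxx (τ, p.2))
      (fun τ => -(1 / 2) * g (τ, p.2)) (𝓝[≠] 0) (Ioo (p.1 - r) (p.1 + r)) :=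
    ((uniformContinuous_const_smul (-(1 / 2) : ℝ)).comp_tendstoUniformlyOn
      ((hunif.comp fun τ => (τ, p.2)).mono hline))
  refine hasDerivAt_of_tendstoUniformlyOn (f := fun δ τ => _root_.spaceQuot δ u (τ, p.2))
    isOpen_Ioo hunif' ?_ ?_ ⟨by linarith, by linarith⟩
  · filter_upwards [happrox 1 one_pos] with δ hδ τ hτ
    exact (hquot δ hδ.1).time (τ, p.2) (hNV (hline τ hτ))
  · exact fun τ hτ => tendsto_spaceQuot (hu.space (τ, p.2) (hVU (hNV (hline τ hτ))))

end IsBackwardHeatOn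

/-- A function of two real variables with continuous partial derivatives is continuous. -/
lemma continuousOn_of_continuousOn_partial {U : Set (ℝ × ℝ)} (hU : IsOpen U)
    {u ut ux : ℝ × ℝ → ℝ}
    (h_t : ∀ p ∈ U, HasDerivAt (fun τ => u (τ, p.2)) (ut p) p.1)
    (h_x : ∀ p ∈ U, HasDerivAt (fun ξ => u (p.1, ξ)) (ux p) p.2)
    (ut_cont : ContinuousOn ut U) (ux_cont : ContinuousOn ux U) : ContinuousOn u U := by
  intro p hp
  have hmem := hU.mem_nhds hp
  let L : ℝ →L[ℝ] ℝ →L[ℝ] ℝ := ContinuousLinearMap.toSpanSingletonCLE.toContinuousLinearMap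
  have hs := hasStrictFDerivAt_uncurry_coprod (𝕜 := ℝ) (u := p) (f := fun t x => u (t, x))
    (f₁ := fun t x => ContinuousLinearMap.toSpanSingleton ℝ (ut (t, x)))
    (f₂ := fun t x => ContinuousLinearMap.toSpanSingleton ℝ (ux (t, x)))
    (by filter_upwards [hmem] with q hq using (h_t q hq).hasFDerivAt)
    (by filter_upwards [hmem] with q hq using (h_x q hq).hasFDerivAt)
    (L.continuous.continuousAt.comp (ut_cont.continuousAt hmem))
    (L.continuous.continuousAt.comp (ux_cont.continuousAt hmem))
  exact hs.continuousAt.continuousWithinAt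

/-- **Cole–Hopf correspondence.**
If `h : ℝ × ℝ → ℝ` is continuously differentiable in `t` and twice continuously
differentiable in `x` on an open set `U`, is nonvanishing on `U`, and solves the
backward heat equation `−∂h/∂t = (1/2)·∂²h/∂x²` on `U` (with partial derivatives
`ht`, `hx`, `hxx`), then `μ := hx / h` solves Burgers' equation
`−∂μ/∂t = (1/2)·∂²μ/∂x² + μ·∂μ/∂x` on `U`. -/
theorem cole_hopf_burgers
    (U : Set (ℝ × ℝ)) (hU : IsOpen U)
    (h ht hx hxx : ℝ × ℝ → ℝ)
    (hne : ∀ p ∈ U, h p ≠ 0)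
    -- `h` is differentiable in `t` with partial derivative `ht`
    (h_t : ∀ p ∈ U, HasDerivAt (fun τ : ℝ => h (τ, p.2)) (ht p) p.1)
    -- `h` is twice differentiable in `x` with partial derivatives `hx`, `hxx`
    (h_x : ∀ p ∈ U, HasDerivAt (fun ξ : ℝ => h (p.1, ξ)) (hx p) p.2)
    (h_xx : ∀ p ∈ U, HasDerivAt (fun ξ : ℝ => hx (p.1, ξ)) (hxx p) p.2)
    -- continuity of the partial derivatives on `U`
    (ht_cont : ContinuousOn ht U)
    (hx_cont : ContinuousOn hx U)
    (hxx_cont : ContinuousOn hxx U)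
    -- `h` solves the backward heat equation on `U`
    (heat : ∀ p ∈ U, -ht p = (1 / 2) * hxx p) :
    ∀ p ∈ U,
      -(deriv (fun τ : ℝ => hx (τ, p.2) / h (τ, p.2)) p.1) =
        (1 / 2) * deriv (deriv (fun ξ : ℝ => hx (p.1, ξ) / h (p.1, ξ))) p.2 +
          (hx p / h p) * deriv (fun ξ : ℝ => hx (p.1, ξ) / h (p.1, ξ)) p.2 := by
  intro p hp
  have hu : IsBackwardHeatOn U h hx hxx :=
    ⟨continuousOn_of_continuousOn_partial hU h_t h_x ht_cont hx_cont,
      fun q hq => (h_t q hq).congr_deriv (by linarith [heat q hq]), h_x, h_xx⟩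
  obtain ⟨g, hg_x, hg_t⟩ := hu.exists_third_deriv hU hx_cont hp
  have hp0 := hne p hp
  have hdt := hg_t.fun_div (hu.time p hp) hp0
  have hdx : ∀ q ∈ U, HasDerivAt (fun ξ => hx (q.1, ξ) / h (q.1, ξ))
      ((hxx q * h q - hx q * hx q) / h q ^ 2) q.2 := fun q hq =>
    (h_xx q hq).fun_div (h_x q hq) (hne q hq)
  have hnear : ∀ᶠ ξ in 𝓝 p.2, (p.1, ξ) ∈ U :=
    (Continuous.prodMk_right p.1).continuousAt.preimage_mem_nhds (hU.mem_nhds hp)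
  have hderiv : deriv (fun ξ => hx (p.1, ξ) / h (p.1, ξ)) =ᶠ[𝓝 p.2]
      fun ξ => (hxx (p.1, ξ) * h (p.1, ξ) - hx (p.1, ξ) * hx (p.1, ξ)) / h (p.1, ξ) ^ 2 := by
    filter_upwards [hnear] with ξ hξ using (hdx (p.1, ξ) hξ).deriv
  have hdxx := ((hg_x.fun_mul (h_x p hp)).fun_sub ((h_xx p hp).fun_mul (h_xx p hp))).fun_div
    ((h_x p hp).fun_pow 2) (pow_ne_zero 2 hp0)
  rw [hdt.deriv, hderiv.deriv_eq, hdxx.deriv, (hdx p hp).deriv]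
  simp only [Prod.mk.eta]
  field_simp
  ring
end

section
/- Let g₀(t,x) := (2πt)^{−1/2}·exp(−x²/(2t)) for t > 0, and define the associated heat functions w_n(x,t) := g₀(t,x)·v_n(x,−t)·(t/2)^{−n}. Then for every n ∈ ℕ and all x ∈ ℝ, t > 0, one has ∂w_n/∂x (x,t) = −(1/2)·w_{n+1}(x,t). -/
/-- Heat polynomials `v_n(x,t) = Σ_{k=0}^{⌊n/2⌋} n!/(2^k·k!·(n−2k)!)·x^{n−2k}·t^k`. -/
noncomputable def heatPoly (n : ℕ) (x t : ℝ) : ℝ :=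
  ∑ k ∈ Finset.range (n / 2 + 1),
    ((Nat.factorial n : ℝ) / (2 ^ k * Nat.factorial k * Nat.factorial (n - 2 * k))) *
      x ^ (n - 2 * k) * t ^ k

/-- The Gaussian fundamental solution `g₀(t,x) = (2πt)^{−1/2}·exp(−x²/(2t))`. -/
noncomputable def gauss0 (t x : ℝ) : ℝ :=
  (2 * Real.pi * t) ^ (-(1 / 2 : ℝ)) * Real.exp (-x ^ 2 / (2 * t))

/-- The associated heat functions `w_n(x,t) = g₀(t,x)·v_n(x,−t)·(t/2)^{−n}`. -/
noncomputable def assocHeat (n : ℕ) (x t : ℝ) : ℝ :=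
  gauss0 t x * heatPoly n x (-t) * (t / 2) ^ (-(n : ℤ))

/-- The coefficient of `x^{n−2k}·t^k` in `v_n` is `C(n,2k)·(2k)!/(2^k·k!)`, which vanishes for
`2k > n`; hence the sum may be extended to any larger range. -/
theorem heatPoly_eq_sum_choose {n N : ℕ} (hN : n / 2 + 1 ≤ N) (x t : ℝ) :
    heatPoly n x t = ∑ k ∈ Finset.range N,
      (n.choose (2 * k) : ℝ) * ((Nat.factorial (2 * k) : ℝ) / (2 ^ k * Nat.factorial k)) *
        x ^ (n - 2 * k) * t ^ k := by
  unfold heatPoly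
  rw [← Finset.sum_subset (Finset.range_mono hN)]
  · refine Finset.sum_congr rfl fun k hk => ?_
    have hk' : 2 * k ≤ n := by
      rw [Finset.mem_range] at hk
      omega
    rw [Nat.cast_choose ℝ hk']
    field_simp
  · intro k _ hk
    have hk' : n < 2 * k := by
      rw [Finset.mem_range] at hk
      omega
    simp [Nat.choose_eq_zero_of_lt hk']

/-- The heat polynomial `v_n` is differentiable in `x`, and `v_{n+1} = x·v_n + t·∂v_n/∂x`. -/
theorem exists_hasDerivAt_heatPoly (n : ℕ) (x t : ℝ) :
    ∃ v' : ℝ, HasDerivAt (fun ξ => heatPoly n ξ t) v' x ∧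
      heatPoly (n + 1) x t = x * heatPoly n x t + t * v' := by
  refine ⟨∑ k ∈ Finset.range (n + 1),
      (n.choose (2 * k) : ℝ) * ((Nat.factorial (2 * k) : ℝ) / (2 ^ k * Nat.factorial k)) *
        (((n - 2 * k : ℕ) : ℝ) * x ^ (n - 2 * k - 1)) * t ^ k, ?_, ?_⟩
  · simp_rw [heatPoly_eq_sum_choose (show n / 2 + 1 ≤ n + 1 by omega)]
    exact HasDerivAt.fun_sum fun k _ => ((hasDerivAt_pow _ x).const_mul _).mul_const _
  · rw [heatPoly_eq_sum_choose (show (n + 1) / 2 + 1 ≤ n + 1 + 1 by omega),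
      heatPoly_eq_sum_choose (show n / 2 + 1 ≤ n + 1 + 1 by omega), Finset.sum_range_succ',
      Finset.sum_range_succ' _ (n + 1), mul_add, Finset.mul_sum, Finset.mul_sum,
      add_right_comm, ← Finset.sum_add_distrib]
    congr 1
    · refine Finset.sum_congr rfl fun k _ => ?_
      have hfac : (Nat.factorial (2 * (k + 1)) : ℝ) / (2 ^ (k + 1) * Nat.factorial (k + 1)) =
          (2 * k + 1) * ((Nat.factorial (2 * k) : ℝ) / (2 ^ k * Nat.factorial k)) := by
        rw [show 2 * (k + 1) = 2 * k + 1 + 1 by ring, Nat.factorial_succ (2 * k + 1),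
          Nat.factorial_succ (2 * k), Nat.factorial_succ k]
        push_cast
        field_simp
        ring
      have hchoose : (n.choose (2 * k + 1) : ℝ) * (2 * k + 1) =
          n.choose (2 * k) * ((n - 2 * k : ℕ) : ℝ) := by
        exact_mod_cast Nat.choose_succ_right_eq n (2 * k)
      have hpow : (n.choose (2 * (k + 1)) : ℝ) * x ^ (n + 1 - 2 * (k + 1)) =
          n.choose (2 * (k + 1)) * (x * x ^ (n - 2 * (k + 1))) := by
        rcases le_or_gt (2 * (k + 1)) n with h | h
        · rw [Nat.sub_add_comm h, pow_succ']
        · simp [Nat.choose_eq_zero_of_lt h]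
      have hpascal : ((n + 1).choose (2 * (k + 1)) : ℝ) =
          n.choose (2 * k + 1) + n.choose (2 * (k + 1)) := by
        exact_mod_cast Nat.choose_succ_succ n (2 * k + 1)
      have hexp : n + 1 - 2 * (k + 1) = n - 2 * k - 1 := by omega
      rw [hexp] at hpow ⊢
      rw [hpascal, hfac]
      set c := (Nat.factorial (2 * k) : ℝ) / (2 ^ k * Nat.factorial k)
      linear_combination c * x ^ (n - 2 * k - 1) * t ^ (k + 1) * hchoose +
        (2 * k + 1) * c * t ^ (k + 1) * hpow
    · simp [pow_succ']

/-- The logarithmic derivative of `g₀(t,·)` is `−x/t`. -/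
theorem hasDerivAt_gauss0 (t x : ℝ) :
    HasDerivAt (gauss0 t) (-(x / t) * gauss0 t x) x := by
  have hexponent : HasDerivAt (fun ξ : ℝ => -ξ ^ 2 / (2 * t)) (-(x / t)) x := by
    refine ((hasDerivAt_pow 2 x).fun_neg.div_const (2 * t)).congr_deriv ?_
    rcases eq_or_ne t 0 with rfl | ht
    · simp
    · field_simp
      norm_num
  refine (hexponent.exp.const_mul ((2 * Real.pi * t) ^ (-(1 / 2 : ℝ)))).congr_deriv ?_
  unfold gauss0
  ring

/-- For every `n` and `t > 0`, `w_n'(x,t) = −(1/2)·w_{n+1}(x,t)`, where the prime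
denotes differentiation in `x`. -/
theorem assocHeat_deriv_x (n : ℕ) :
    ∀ (x t : ℝ), 0 < t →
      deriv (fun ξ : ℝ => assocHeat n ξ t) x = -(1 / 2) * assocHeat (n + 1) x t := by
  intro x t ht
  obtain ⟨v', hv', hrec⟩ := exists_hasDerivAt_heatPoly n x (-t)
  have hw : HasDerivAt (fun ξ => assocHeat n ξ t) _ x :=
    ((hasDerivAt_gauss0 t x).mul hv').mul_const ((t / 2) ^ (-(n : ℤ)))
  rw [hw.deriv, assocHeat, hrec, Nat.cast_succ, neg_add, zpow_add₀ (by positivity), zpow_neg_one]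
  field_simp
  ring
end

section
/- Let g₀(t,x) := (2πt)^{−1/2}·exp(−x²/(2t)) for t > 0, and define w_n(x,t) := g₀(t,x)·v_n(x,−t)·(t/2)^{−n}. Then for every n ∈ ℕ, w_n satisfies the heat equation ∂w_n/∂t = (1/2)·∂²w_n/∂x² at every (x,t) with t > 0. -/
/-- The coefficient of `x^{n−2k}·t^k` in the heat polynomial `v_n`. -/
noncomputable def heatCoeff (n k : ℕ) : ℝ :=
  (Nat.factorial n : ℝ) / (2 ^ k * Nat.factorial k * Nat.factorial (n - 2 * k))

/-- The formal `x`-derivative of the heat polynomial. -/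
noncomputable def heatPolyDx (n : ℕ) (x t : ℝ) : ℝ :=
  ∑ k ∈ Finset.range (n / 2 + 1),
    heatCoeff n k * (((n - 2 * k : ℕ) : ℝ) * x ^ (n - 2 * k - 1)) * t ^ k

/-- The formal second `x`-derivative of the heat polynomial. -/
noncomputable def heatPolyDxx (n : ℕ) (x t : ℝ) : ℝ :=
  ∑ k ∈ Finset.range (n / 2 + 1),
    heatCoeff n k * (((n - 2 * k : ℕ) : ℝ) *
      (((n - 2 * k - 1 : ℕ) : ℝ) * x ^ (n - 2 * k - 1 - 1))) * t ^ k

/-- The formal `t`-derivative of the heat polynomial. -/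
noncomputable def heatPolyDt (n : ℕ) (x t : ℝ) : ℝ :=
  ∑ k ∈ Finset.range (n / 2 + 1),
    heatCoeff n k * x ^ (n - 2 * k) * ((k : ℝ) * t ^ (k - 1))

theorem hasDerivAt_heatPoly_space (n : ℕ) (x t : ℝ) :
    HasDerivAt (fun ξ => heatPoly n ξ t) (heatPolyDx n x t) x := by
  unfold heatPoly heatPolyDx
  exact HasDerivAt.fun_sum fun k _ =>
    ((hasDerivAt_pow (n - 2 * k) x).const_mul (heatCoeff n k)).mul_const (t ^ k)

theorem hasDerivAt_heatPolyDx_space (n : ℕ) (x t : ℝ) :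
    HasDerivAt (fun ξ => heatPolyDx n ξ t) (heatPolyDxx n x t) x := by
  unfold heatPolyDx heatPolyDxx
  exact HasDerivAt.fun_sum fun k _ =>
    (((hasDerivAt_pow (n - 2 * k - 1) x).const_mul _).const_mul (heatCoeff n k)).mul_const (t ^ k)

theorem hasDerivAt_heatPoly_time (n : ℕ) (x t : ℝ) :
    HasDerivAt (fun τ => heatPoly n x τ) (heatPolyDt n x t) t := by
  unfold heatPoly heatPolyDt
  exact HasDerivAt.fun_sum fun k _ =>
    (hasDerivAt_pow k t).const_mul (heatCoeff n k * x ^ (n - 2 * k))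

theorem natCast_mul_pow_pred {R : Type*} [CommSemiring R] (m : ℕ) (x : R) :
    x * ((m : R) * x ^ (m - 1)) = m * x ^ m := by
  cases m with
  | zero => simp
  | succ m => simp only [Nat.add_sub_cancel, pow_succ]; ring

/-- Euler's identity for the parabolic homogeneity of the heat polynomials. -/
theorem heatPoly_euler (n : ℕ) (x t : ℝ) :
    x * heatPolyDx n x t + 2 * t * heatPolyDt n x t = n * heatPoly n x t := by
  unfold heatPoly heatPolyDx heatPolyDt
  simp only [Finset.mul_sum, ← Finset.sum_add_distrib]
  refine Finset.sum_congr rfl fun k hk => ?_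
  have hk' : 2 * k ≤ n := by have := Finset.mem_range.mp hk; omega
  have hx := natCast_mul_pow_pred (n - 2 * k) x
  have ht := natCast_mul_pow_pred k t
  have hc : ((n - 2 * k : ℕ) : ℝ) = n - 2 * k := by push_cast [hk']; ring
  rw [hc] at hx ⊢
  change _ = (n : ℝ) * (heatCoeff n k * x ^ (n - 2 * k) * t ^ k)
  linear_combination heatCoeff n k * t ^ k * hx + 2 * heatCoeff n k * x ^ (n - 2 * k) * ht

theorem heatCoeff_succ {n k : ℕ} (h : 2 * (k + 1) ≤ n) :
    heatCoeff n (k + 1) * ((k + 1 : ℕ) : ℝ) =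
      1 / 2 * (heatCoeff n k * (((n - 2 * k : ℕ) : ℝ) * ((n - 2 * k - 1 : ℕ) : ℝ))) := by
  obtain ⟨m, rfl⟩ := Nat.exists_eq_add_of_le h
  have h₁ : 2 * (k + 1) + m - 2 * (k + 1) = m := by omega
  have h₂ : 2 * (k + 1) + m - 2 * k = m + 2 := by omega
  unfold heatCoeff
  rw [h₁, h₂, Nat.factorial_succ k, Nat.factorial_succ (m + 1), Nat.factorial_succ m]
  have hk := Nat.cast_ne_zero (R := ℝ).mpr k.factorial_ne_zero
  have hm := Nat.cast_ne_zero (R := ℝ).mpr m.factorial_ne_zero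
  have hk₁ : (k : ℝ) + 1 ≠ 0 := by positivity
  have hm₁ : (m : ℝ) + 1 ≠ 0 := by positivity
  have hm₂ : (m : ℝ) + 1 + 1 ≠ 0 := by positivity
  have h₃ : m + 2 - 1 = m + 1 := rfl
  have h₄ : (m : ℝ) + 2 = m + 1 + 1 := by ring
  rw [h₃]
  push_cast
  rw [h₄, pow_succ]
  field_simp

theorem heatPoly_heat_equation (n : ℕ) (x t : ℝ) :
    heatPolyDt n x t = 1 / 2 * heatPolyDxx n x t := by
  unfold heatPolyDt heatPolyDxx
  have hlast : ((n - 2 * (n / 2) : ℕ) : ℝ) * ((n - 2 * (n / 2) - 1 : ℕ) : ℝ) = 0 := by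
    have : n - 2 * (n / 2) = 0 ∨ n - 2 * (n / 2) - 1 = 0 := by omega
    rcases this with h | h <;> simp [h]
  rw [Finset.sum_range_succ', Finset.sum_range_succ, ← mul_assoc ((n - 2 * (n / 2) : ℕ) : ℝ),
    hlast]
  simp only [Nat.cast_zero, zero_mul, mul_zero, add_zero, Finset.mul_sum]
  refine Finset.sum_congr rfl fun k hk => ?_
  have hk' : 2 * (k + 1) ≤ n := by have := Finset.mem_range.mp hk; omega
  have he : n - 2 * k - 1 - 1 = n - 2 * (k + 1) := by omega
  rw [he, Nat.add_sub_cancel]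
  linear_combination x ^ (n - 2 * (k + 1)) * t ^ k * heatCoeff_succ hk'

theorem hasDerivAt_gauss0_space (t x : ℝ) :
    HasDerivAt (fun ξ => gauss0 t ξ) (-(x / t) * gauss0 t x) x := by
  unfold gauss0
  have h : HasDerivAt (fun ξ : ℝ => -ξ ^ 2 / (2 * t)) (-(x / t)) x := by
    refine ((hasDerivAt_pow 2 x).fun_neg.div_const (2 * t)).congr_deriv ?_
    rw [← neg_div, ← mul_div_mul_left (-x) t two_ne_zero]
    simp
  refine (h.exp.const_mul _).congr_deriv ?_
  ring

theorem hasDerivAt_gauss0_time {t : ℝ} (ht : 0 < t) (x : ℝ) :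
    HasDerivAt (fun τ => gauss0 τ x) (1 / 2 * (x ^ 2 / t ^ 2 - 1 / t) * gauss0 t x) t := by
  unfold gauss0
  have hpos : 0 < 2 * Real.pi * t := by positivity
  have hlin : HasDerivAt (fun τ : ℝ => 2 * Real.pi * τ) (2 * Real.pi) t := by
    simpa using (hasDerivAt_id t).const_mul (2 * Real.pi)
  have hpow := hlin.rpow_const (p := -(1 / 2 : ℝ)) (Or.inl hpos.ne')
  have hexp : HasDerivAt (fun τ : ℝ => -x ^ 2 / (2 * τ)) (x ^ 2 / (2 * t ^ 2)) t := by
    have h2 : HasDerivAt (fun τ : ℝ => 2 * τ) 2 t := by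
      simpa using (hasDerivAt_id t).const_mul (2 : ℝ)
    refine ((hasDerivAt_const t (-x ^ 2)).fun_div h2 (by positivity)).congr_deriv ?_
    field_simp
    ring
  refine (hpow.mul hexp.exp).congr_deriv ?_
  rw [Real.rpow_sub_one hpos.ne']
  field_simp
  ring

theorem hasDerivAt_assocHeat_space (n : ℕ) (x t : ℝ) :
    HasDerivAt (fun ξ => assocHeat n ξ t)
      (gauss0 t x * (heatPolyDx n x (-t) - x / t * heatPoly n x (-t)) * (t / 2) ^ (-(n : ℤ)))
      x := by
  unfold assocHeat
  refine (((hasDerivAt_gauss0_space t x).mul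
    (hasDerivAt_heatPoly_space n x (-t))).mul_const _).congr_deriv ?_
  ring

theorem deriv_deriv_assocHeat_space (n : ℕ) (x t : ℝ) :
    deriv (deriv (fun ξ => assocHeat n ξ t)) x =
      gauss0 t x * (heatPolyDxx n x (-t) - 2 * (x / t) * heatPolyDx n x (-t)
        + (x ^ 2 / t ^ 2 - 1 / t) * heatPoly n x (-t)) * (t / 2) ^ (-(n : ℤ)) := by
  rw [funext fun ξ => (hasDerivAt_assocHeat_space n ξ t).deriv]
  refine ((((hasDerivAt_gauss0_space t x).mul ((hasDerivAt_heatPolyDx_space n x (-t)).sub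
    (((hasDerivAt_id x).div_const t).mul (hasDerivAt_heatPoly_space n x (-t))))).mul_const
    _).congr_deriv ?_).deriv
  simp only [id, Pi.sub_apply, Pi.mul_apply]
  ring

theorem hasDerivAt_assocHeat_time (n : ℕ) (x : ℝ) {t : ℝ} (ht : 0 < t) :
    HasDerivAt (fun τ => assocHeat n x τ)
      (gauss0 t x * (1 / 2 * (x ^ 2 / t ^ 2 - 1 / t) * heatPoly n x (-t) - heatPolyDt n x (-t)
        - n / t * heatPoly n x (-t)) * (t / 2) ^ (-(n : ℤ))) t := by
  unfold assocHeat
  have hpoly : HasDerivAt (fun τ => heatPoly n x (-τ)) (-heatPolyDt n x (-t)) t := by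
    refine ((hasDerivAt_heatPoly_time n x (-t)).comp t (hasDerivAt_neg t)).congr_deriv ?_
    ring
  have ht2 : t / 2 ≠ 0 := by positivity
  have hpow : HasDerivAt (fun τ : ℝ => (τ / 2) ^ (-(n : ℤ)))
      (-(n / t) * (t / 2) ^ (-(n : ℤ))) t := by
    refine ((hasDerivAt_zpow (-(n : ℤ)) (t / 2) (Or.inl ht2)).comp t
      ((hasDerivAt_id t).div_const 2)).congr_deriv ?_
    rw [zpow_sub_one₀ ht2]
    push_cast
    field_simp
  refine (((hasDerivAt_gauss0_time ht x).mul hpoly).mul hpow).congr_deriv ?_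
  simp only [Pi.mul_apply]
  ring

/-- Every associated heat function `w_n` satisfies the heat equation
`∂w_n/∂t = (1/2)·∂²w_n/∂x²` at every `(x,t)` with `t > 0`. -/
theorem assocHeat_solves_heat_equation (n : ℕ) :
    ∀ (x t : ℝ), 0 < t →
      deriv (fun τ : ℝ => assocHeat n x τ) t =
        (1 / 2) * deriv (deriv (fun ξ : ℝ => assocHeat n ξ t)) x := by
  intro x t ht
  rw [(hasDerivAt_assocHeat_time n x ht).deriv, deriv_deriv_assocHeat_space]
  have heuler : x / t * heatPolyDx n x (-t) - 2 * heatPolyDt n x (-t)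
      = n / t * heatPoly n x (-t) := by
    have h := heatPoly_euler n x (-t)
    field_simp
    linear_combination h
  have hheat := heatPoly_heat_equation n x (-t)
  linear_combination gauss0 t x * (t / 2) ^ (-(n : ℤ)) * (heuler + hheat)
end
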